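/- Let X, Y ⊆ ω. There exists an embedding of pcas of B^X into B^Y if and only if X is Turing reducible to Y. -/

import Mathlib

namespace PCAEmb

/-! ### Oracle computability -/

/-- Codes for partial functions computable relative to an oracle. -/
inductive OCode : Type
  | zero : OCode
  | succ : OCode
  | left : OCode
  | right : OCode
  | oracle : OCode
  | pair : OCode → OCode → OCode
  | comp : OCode → OCode → OCode
  | prec : OCode → OCode → OCode
  | rfind' : OCode → OCode

/-- Evaluation of an oracle code, relative to a (partial) oracle `O`. -/
def evalo (O : ℕ →. ℕ) : OCode → ℕ →. ℕ
  | .zero => pure 0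
  | .succ => Nat.succ
  | .left => ↑fun n : ℕ => n.unpair.1
  | .right => ↑fun n : ℕ => n.unpair.2
  | .oracle => O
  | .pair cf cg => fun n => Nat.pair <$> evalo O cf n <*> evalo O cg n
  | .comp cf cg => fun n => evalo O cg n >>= evalo O cf
  | .prec cf cg =>
      Nat.unpaired fun a n =>
        n.rec (evalo O cf a) fun y IH => do
          let i ← IH
          evalo O cg (Nat.pair a (Nat.pair y i))
  | .rfind' cf =>
      Nat.unpaired fun a m =>
        (Nat.rfind fun n => (fun x => x = 0) <$> evalo O cf (Nat.pair a (n + m))).map (· + m)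

/-- The standard numbering of oracle codes. -/
def OCode.ofNat : ℕ → OCode
  | 0 => .zero
  | 1 => .succ
  | 2 => .left
  | 3 => .right
  | 4 => .oracle
  | n + 5 =>
    match n % 4 with
    | 0 => .pair (OCode.ofNat (n / 4).unpair.1) (OCode.ofNat (n / 4).unpair.2)
    | 1 => .comp (OCode.ofNat (n / 4).unpair.1) (OCode.ofNat (n / 4).unpair.2)
    | 2 => .prec (OCode.ofNat (n / 4).unpair.1) (OCode.ofNat (n / 4).unpair.2)
    | _ => .rfind' (OCode.ofNat (n / 4).unpair.1)
  decreasing_by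
    all_goals
      have h1 := Nat.unpair_left_le (n / 4)
      have h2 := Nat.unpair_right_le (n / 4)
      have h3 := Nat.div_le_self n 4
      omega

/-- The `e`-th Turing functional with oracle `O` : `Φ_e^O`. -/
def phi (O : ℕ →. ℕ) (e : ℕ) : ℕ →. ℕ := evalo O (OCode.ofNat e)

/-- The characteristic function of a set of naturals, as a (total) partial function. -/
noncomputable def chi (X : Set ℕ) : ℕ →. ℕ :=
  fun n => Part.some (X.indicator (fun _ => 1) n)

/-- `ψ` is partial computable relative to the oracle `O`. -/
def RecursiveIn (O : ℕ →. ℕ) (ψ : ℕ →. ℕ) : Prop := ∃ c : OCode, evalo O c = ψ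

/-- Turing reducibility of sets of naturals. -/
def TuringLE (X Y : Set ℕ) : Prop := RecursiveIn (chi Y) (chi X)

/-- A total function `d : ℕ → ℕ` is `Y`-computable. -/
def ComputableIn (Y : Set ℕ) (d : ℕ → ℕ) : Prop :=
  RecursiveIn (chi Y) (fun n => Part.some (d n))

/-- A binary relation on `ℕ` is `Y`-c.e. -/
def CEIn (Y : Set ℕ) (R : ℕ → ℕ → Prop) : Prop :=
  ∃ c : OCode, ∀ n m, R n m ↔ (evalo (chi Y) c (Nat.pair n m)).Dom

/-- A set `W ⊆ ℕ` is `Y`-c.e. -/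
def CE1In (Y : Set ℕ) (W : Set ℕ) : Prop :=
  ∃ c : OCode, ∀ n, n ∈ W ↔ (evalo (chi Y) c n).Dom

/-- The canonical finite set `D_u` with code `u` (binary coding). -/
def Du (u : ℕ) : Set ℕ := {k | u.testBit k}

/-- Enumeration reducibility: `Z ≤ₑ Y`. -/
def EnumLE (Z Y : Set ℕ) : Prop :=
  ∃ W : Set ℕ, CE1In ∅ W ∧ ∀ x, x ∈ Z ↔ ∃ u, Nat.pair x u ∈ W ∧ Du u ⊆ Y

/-- The Turing jump `X'` of a set `X`. -/
def jump (X : Set ℕ) : Set ℕ := {e | (phi (chi X) e e).Dom}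

/-- The halting set `K = {e : φ_e(e)↓}`. -/
def Khalt : Set ℕ := jump ∅

/-! ### Partial combinatory algebras -/

/-- `k·a·b` as a partial element. -/
def app2 {α : Type*} (app : α → α → Part α) (a b c : α) : Part α :=
  (app a b).bind fun x => app x c

/-- `s·a·b·c` as a partial element. -/
def app3 {α : Type*} (app : α → α → Part α) (a b c d : α) : Part α :=
  (app2 app a b c).bind fun x => app x d

/-- A partial applicative structure is a pca if it has (distinct) combinators `s` and `k`. -/
def IsPCA {α : Type*} (app : α → α → Part α) : Prop :=
  ∃ s k : α, s ≠ k ∧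
    (∀ a b : α, app2 app k a b = Part.some a) ∧
    (∀ a b : α, (app2 app s a b).Dom) ∧
    (∀ a b c : α,
      app3 app s a b c = (app a c).bind fun x => (app b c).bind fun y => app x y)

/-- An embedding of partial combinatory algebras: an injection that preserves
(defined) application. -/
def IsPCAEmbedding {α β : Type*} (appA : α → α → Part α) (appB : β → β → Part β)
    (f : α → β) : Prop :=
  Function.Injective f ∧ ∀ a a' c : α, c ∈ appA a a' → f c ∈ appB (f a) (f a')

/-! ### Partial numberings -/

/-- `γ : ℕ ⇀ α` is a partial numbering (i.e. surjective). -/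
def IsNumbering {α : Type*} (γ : ℕ →. α) : Prop := ∀ a : α, ∃ n, a ∈ γ n

/-- `d` is an `(a⊥, a⊤)`-decider for `X` with respect to `γ`. -/
def IsDecider {α : Type*} (γ : ℕ →. α) (abot atop : α) (X : Set ℕ) (d : ℕ → ℕ) : Prop :=
  ∀ n, (n ∉ X → γ (d n) = Part.some abot) ∧ (n ∈ X → γ (d n) = Part.some atop)

/-- `γ` has `Y`-c.e. inequivalence. -/
def CEInequiv {α : Type*} (Y : Set ℕ) (γ : ℕ →. α) : Prop :=
  ∃ R : ℕ → ℕ → Prop, CEIn Y R ∧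
    ∀ n m, (γ n).Dom → (γ m).Dom → (R n m ↔ γ n ≠ γ m)

/-- `γ` is a `Y`-effectively pca-valued partial numbering: the application is
represented on codes by a partial `Y`-computable function `ψ`. -/
def EffValued {α : Type*} (Y : Set ℕ) (app : α → α → Part α) (γ : ℕ →. α) : Prop :=
  ∃ ψ : ℕ →. ℕ, RecursiveIn (chi Y) ψ ∧
    ∀ (n m : ℕ) (a b c : α), a ∈ γ n → b ∈ γ m → c ∈ app a b →
      ∃ j, j ∈ ψ (Nat.pair n m) ∧ c ∈ γ j

/-- `γ` is a strongly `Y`-effectively pca-valued partial numbering. -/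
def StrongEffValued {α : Type*} (Y : Set ℕ) (app : α → α → Part α) (γ : ℕ →. α) : Prop :=
  ∃ ψ : ℕ →. ℕ, RecursiveIn (chi Y) ψ ∧
    (∀ (n m : ℕ) (a b c : α), a ∈ γ n → b ∈ γ m → c ∈ app a b →
      ∃ j, j ∈ ψ (Nat.pair n m) ∧ c ∈ γ j) ∧
    (∀ (n m k l : ℕ) (a b a' b' c : α), a ∈ γ n → b ∈ γ m → a' ∈ γ k → b' ∈ γ l →
      c ∈ app a b → c ∈ app a' b' → ψ (Nat.pair n m) = ψ (Nat.pair k l))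

/-! ### The models -/

/-- Kleene's first model relativized to `X`: application `n · m = Φ_n^X(m)`. -/
noncomputable def k1App (X : Set ℕ) : ℕ → ℕ → Part ℕ := fun n m => phi (chi X) n m

/-- A total function as a partial function. -/
def toPFun (g : ℕ → ℕ) : ℕ →. ℕ := fun n => Part.some (g n)

/-- Join `f ⊕ g` of two partial functions. -/
def pjoin (f g : ℕ →. ℕ) : ℕ →. ℕ := fun n =>
  if n % 2 = 0 then f (n / 2) else g (n / 2)

/-- The totalization of a partial function, as a partial element of `ℕ → ℕ`:
defined iff `ψ` is total. -/
def partToTotal (ψ : ℕ →. ℕ) : Part (ℕ → ℕ) :=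
  ⟨∀ n, (ψ n).Dom, fun H n => (ψ n).get (H n)⟩

/-- Application in Kleene's second model `K₂`: `g · h = Φ^{g⊕h}_{g 0}`,
defined iff this function is total. -/
def k2App (g h : ℕ → ℕ) : Part (ℕ → ℕ) :=
  partToTotal (phi (pjoin (toPFun g) (toPFun h)) (g 0))

/-- Application in van Oosten's sequential model `B`: `θ · ρ = Φ^{θ⊕ρ}_{θ 0}`
(always defined, as a partial function). -/
def bApp (θ ρ : ℕ →. ℕ) : Part (ℕ →. ℕ) :=
  Part.some (fun n => (θ 0).bind fun e => phi (pjoin θ ρ) e n)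

/-- Restriction of a partial applicative structure to a subset. -/
def subApp {α : Type*} (app : α → α → Part α) (P : α → Prop)
    (a b : Subtype P) : Part (Subtype P) :=
  (app a.1 b.1).bind fun c => Part.assert (P c) fun h => Part.some ⟨c, h⟩

/-- Carrier of `K₂^X` : the total `X`-computable functions. -/
def K2el (X : Set ℕ) : Type := {g : ℕ → ℕ // RecursiveIn (chi X) (toPFun g)}

/-- Application in `K₂^X`. -/
def k2XApp (X : Set ℕ) : K2el X → K2el X → Part (K2el X) :=
  subApp k2App _

/-- Carrier of `B^X` : the partial `X`-computable functions. -/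
def Bel (X : Set ℕ) : Type := {θ : ℕ →. ℕ // RecursiveIn (chi X) θ}

/-- Application in `B^X`. -/
def bXApp (X : Set ℕ) : Bel X → Bel X → Part (Bel X) :=
  subApp bApp _

/-- Application in Scott's graph model `G`. -/
def gApp (A B : Set ℕ) : Part (Set ℕ) :=
  Part.some {n | ∃ u, Nat.pair n u ∈ A ∧ Du u ⊆ B}

/-- Carrier of `G^Z` : the sets enumeration-reducible to `Z`. -/
def Gel (Z : Set ℕ) : Type := {A : Set ℕ // EnumLE A Z}

/-- Application in `G^Z`. -/
def gXApp (Z : Set ℕ) : Gel Z → Gel Z → Part (Gel Z) :=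
  subApp gApp _

/-- `X ⊕ X̄ = {2n : n ∈ X} ∪ {2n+1 : n ∉ X}`. -/
def joinCompl (X : Set ℕ) : Set ℕ :=
  {k | ∃ n, (k = 2 * n ∧ n ∈ X) ∨ (k = 2 * n + 1 ∧ n ∉ X)}

/-! ### The λ-calculus -/

/-- Untyped λ-terms (de Bruijn representation). -/
inductive Lam : Type
  | var : ℕ → Lam
  | app : Lam → Lam → Lam
  | abs : Lam → Lam

/-- Lift (shift up) the free variables `≥ d` of a term. -/
def Lam.lift : Lam → ℕ → Lam
  | .var n, d => if n < d then .var n else .var (n + 1)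
  | .app M N, d => .app (M.lift d) (N.lift d)
  | .abs M, d => .abs (M.lift (d + 1))

/-- Substitution `M[k := N]` (de Bruijn). -/
def Lam.subst : Lam → ℕ → Lam → Lam
  | .var n, k, N => if n = k then N else if k < n then .var (n - 1) else .var n
  | .app M M', k, N => .app (M.subst k N) (M'.subst k N)
  | .abs M, k, N => .abs (M.subst (k + 1) (N.lift 0))

/-- β-equivalence of λ-terms. -/
inductive BetaEq : Lam → Lam → Prop
  | beta (M N : Lam) : BetaEq (.app (.abs M) N) (M.subst 0 N)
  | refl (M : Lam) : BetaEq M M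
  | symm {M N : Lam} : BetaEq M N → BetaEq N M
  | trans {M N P : Lam} : BetaEq M N → BetaEq N P → BetaEq M P
  | appCongr {M M' N N' : Lam} :
      BetaEq M M' → BetaEq N N' → BetaEq (.app M N) (.app M' N')
  | absCongr {M M' : Lam} : BetaEq M M' → BetaEq (.abs M) (.abs M')

/-- βη-equivalence of λ-terms. -/
inductive BetaEtaEq : Lam → Lam → Prop
  | beta (M N : Lam) : BetaEtaEq (.app (.abs M) N) (M.subst 0 N)
  | eta (M : Lam) : BetaEtaEq (.abs (.app (M.lift 0) (.var 0))) M
  | refl (M : Lam) : BetaEtaEq M M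
  | symm {M N : Lam} : BetaEtaEq M N → BetaEtaEq N M
  | trans {M N P : Lam} : BetaEtaEq M N → BetaEtaEq N P → BetaEtaEq M P
  | appCongr {M M' N N' : Lam} :
      BetaEtaEq M M' → BetaEtaEq N N' → BetaEtaEq (.app M N) (.app M' N')
  | absCongr {M M' : Lam} : BetaEtaEq M M' → BetaEtaEq (.abs M) (.abs M')

def lamBetaSetoid : Setoid Lam := ⟨BetaEq, ⟨BetaEq.refl, BetaEq.symm, BetaEq.trans⟩⟩

def lamBetaEtaSetoid : Setoid Lam :=
  ⟨BetaEtaEq, ⟨BetaEtaEq.refl, BetaEtaEq.symm, BetaEtaEq.trans⟩⟩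

/-- The pca `λ` of λ-terms modulo β-equivalence. -/
def LamBeta : Type := Quotient lamBetaSetoid

/-- The pca `λη` of λ-terms modulo βη-equivalence. -/
def LamBetaEta : Type := Quotient lamBetaEtaSetoid

/-- Application in `λ` (total). -/
def lamBetaApp : LamBeta → LamBeta → Part LamBeta := fun a b =>
  Part.some (Quotient.map₂ Lam.app (fun _ _ h1 _ _ h2 => BetaEq.appCongr h1 h2) a b)

/-- Application in `λη` (total). -/
def lamBetaEtaApp : LamBetaEta → LamBetaEta → Part LamBetaEta := fun a b =>
  Part.some (Quotient.map₂ Lam.app (fun _ _ h1 _ _ h2 => BetaEtaEq.appCongr h1 h2) a b)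


open Nat.Partrec (Code)

/-! ### Helper lemmas -/

/-- Substitute an ordinary code for the oracle. -/
def sub (d : Code) : OCode → Code
  | .zero => .zero
  | .succ => .succ
  | .left => .left
  | .right => .right
  | .oracle => d
  | .pair a b => .pair (sub d a) (sub d b)
  | .comp a b => .comp (sub d a) (sub d b)
  | .prec a b => .prec (sub d a) (sub d b)
  | .rfind' a => .rfind' (sub d a)

theorem eval_sub (d : Code) (c : OCode) : (sub d c).eval = evalo d.eval c := by
  induction c <;> simp_all [sub, Code.eval, evalo] <;> rfl

theorem sub_computable (c : OCode) : Computable (fun d => sub d c) := by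
  induction c with
  | zero => exact Computable.const _
  | succ => exact Computable.const _
  | left => exact Computable.const _
  | right => exact Computable.const _
  | oracle => exact Computable.id
  | pair a b ha hb => exact Code.primrec₂_pair.to_comp.comp ha hb
  | comp a b ha hb => exact Code.primrec₂_comp.to_comp.comp ha hb
  | prec a b ha hb => exact Code.primrec₂_prec.to_comp.comp ha hb
  | rfind' a ha => exact Code.primrec_rfind'.to_comp.comp ha

/-- Translate ordinary codes to oracle codes. -/
def tr : Code → OCode
  | .zero => .zero
  | .succ => .succ
  | .left => .left
  | .right => .right
  | .pair a b => .pair (tr a) (tr b)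
  | .comp a b => .comp (tr a) (tr b)
  | .prec a b => .prec (tr a) (tr b)
  | .rfind' a => .rfind' (tr a)

theorem evalo_tr (O : ℕ →. ℕ) (c : Code) : evalo O (tr c) = c.eval := by
  induction c <;> simp_all [tr, Code.eval, evalo] <;> rfl

theorem exists_tr {g : ℕ → ℕ} (hg : Computable g) :
    ∃ c : OCode, ∀ O n, evalo O c n = Part.some (g n) := by
  obtain ⟨c, hc⟩ := Code.exists_code.1 (Partrec.nat_iff.1 hg)
  exact ⟨tr c, fun O n => by rw [evalo_tr, hc]; rfl⟩

/-- Replace the oracle by an oracle code. -/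
def osub (d : OCode) : OCode → OCode
  | .zero => .zero
  | .succ => .succ
  | .left => .left
  | .right => .right
  | .oracle => d
  | .pair a b => .pair (osub d a) (osub d b)
  | .comp a b => .comp (osub d a) (osub d b)
  | .prec a b => .prec (osub d a) (osub d b)
  | .rfind' a => .rfind' (osub d a)

theorem evalo_osub (O : ℕ →. ℕ) (d c : OCode) :
    evalo O (osub d c) = evalo (evalo O d) c := by
  induction c <;> simp_all [osub, evalo] <;> rfl

theorem ofNat_surj (c : OCode) : ∃ n, OCode.ofNat n = c := by
  induction c with
  | zero => exact ⟨0, by simp [OCode.ofNat]⟩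
  | succ => exact ⟨1, by simp [OCode.ofNat]⟩
  | left => exact ⟨2, by simp [OCode.ofNat]⟩
  | right => exact ⟨3, by simp [OCode.ofNat]⟩
  | oracle => exact ⟨4, by simp [OCode.ofNat]⟩
  | pair a b ha hb =>
    obtain ⟨n, rfl⟩ := ha
    obtain ⟨m, rfl⟩ := hb
    refine ⟨(4 * Nat.pair n m + 0) + 5, ?_⟩
    show OCode.ofNat ((4 * Nat.pair n m) + 5) = _
    rw [OCode.ofNat]
    have h1 : (4 * Nat.pair n m) % 4 = 0 := by omega
    have h2 : (4 * Nat.pair n m) / 4 = Nat.pair n m := by omega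
    simp only [h1, h2, Nat.unpair_pair]
  | comp a b ha hb =>
    obtain ⟨n, rfl⟩ := ha
    obtain ⟨m, rfl⟩ := hb
    refine ⟨4 * Nat.pair n m + 1 + 5, ?_⟩
    rw [OCode.ofNat]
    have h1 : (4 * Nat.pair n m + 1) % 4 = 1 := by omega
    have h2 : (4 * Nat.pair n m + 1) / 4 = Nat.pair n m := by omega
    simp only [h1, h2, Nat.unpair_pair]
  | prec a b ha hb =>
    obtain ⟨n, rfl⟩ := ha
    obtain ⟨m, rfl⟩ := hb
    refine ⟨4 * Nat.pair n m + 2 + 5, ?_⟩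
    rw [OCode.ofNat]
    have h1 : (4 * Nat.pair n m + 2) % 4 = 2 := by omega
    have h2 : (4 * Nat.pair n m + 2) / 4 = Nat.pair n m := by omega
    simp only [h1, h2, Nat.unpair_pair]
  | rfind' a ha =>
    obtain ⟨n, rfl⟩ := ha
    refine ⟨4 * Nat.pair n 0 + 3 + 5, ?_⟩
    rw [OCode.ofNat]
    have h1 : (4 * Nat.pair n 0 + 3) % 4 = 3 := by omega
    have h2 : (4 * Nat.pair n 0 + 3) / 4 = Nat.pair n 0 := by omega
    simp only [h1, h2, Nat.unpair_pair]

/-! ### Convergence of oracles -/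

/-- The approximations `A w` converge to `O` from below. -/
def Conv (A : ℕ → ℕ →. ℕ) (O : ℕ →. ℕ) : Prop :=
  (∀ w x y, y ∈ A w x → y ∈ O x) ∧
    ∀ x y, y ∈ O x → ∀ᶠ w in Filter.atTop, y ∈ A w x

theorem Conv.const (O : ℕ →. ℕ) : Conv (fun _ => O) O :=
  ⟨fun _ _ _ h => h, fun _ _ h => Filter.Eventually.of_forall fun _ => h⟩

theorem Conv.pjoin {A B : ℕ → ℕ →. ℕ} {O P : ℕ →. ℕ} (hA : Conv A O) (hB : Conv B P) :
    Conv (fun w => pjoin (A w) (B w)) (pjoin O P) := by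
  refine ⟨fun w x y h => ?_, fun x y h => ?_⟩
  · by_cases hx : x % 2 = 0
    · simp only [PCAEmb.pjoin, hx, if_true] at h ⊢
      exact hA.1 _ _ _ h
    · simp only [PCAEmb.pjoin, hx, if_false] at h ⊢
      exact hB.1 _ _ _ h
  · by_cases hx : x % 2 = 0
    · simp only [PCAEmb.pjoin, hx, if_true] at h ⊢
      exact hA.2 _ _ h
    · simp only [PCAEmb.pjoin, hx, if_false] at h ⊢
      exact hB.2 _ _ h

theorem mem_pair {O : ℕ →. ℕ} {a b : OCode} {x y : ℕ} :
    y ∈ evalo O (.pair a b) x ↔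
      ∃ u ∈ evalo O a x, ∃ v ∈ evalo O b x, Nat.pair u v = y := by
  simp [evalo, Seq.seq]

theorem mem_comp {O : ℕ →. ℕ} {a b : OCode} {x y : ℕ} :
    y ∈ evalo O (.comp a b) x ↔ ∃ u ∈ evalo O b x, y ∈ evalo O a u := by
  simp only [evalo]
  exact Part.mem_bind_iff

theorem mem_prec_zero {O : ℕ →. ℕ} {a b : OCode} {p y : ℕ} :
    y ∈ evalo O (.prec a b) (Nat.pair p 0) ↔ y ∈ evalo O a p := by
  simp [evalo]

theorem mem_prec_succ {O : ℕ →. ℕ} {a b : OCode} {p n y : ℕ} :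
    y ∈ evalo O (.prec a b) (Nat.pair p (n + 1)) ↔
      ∃ i ∈ evalo O (.prec a b) (Nat.pair p n),
        y ∈ evalo O b (Nat.pair p (Nat.pair n i)) := by
  simp [evalo]

theorem mem_rfind' {O : ℕ →. ℕ} {a : OCode} {p m y : ℕ} :
    y ∈ evalo O (.rfind' a) (Nat.pair p m) ↔
      ∃ n, (0 ∈ evalo O a (Nat.pair p (n + m)) ∧
        ∀ k < n, ∃ z ∈ evalo O a (Nat.pair p (k + m)), z ≠ 0) ∧ n + m = y := by
  simp only [evalo, Nat.unpaired, Nat.unpair_pair, Part.mem_map_iff]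
  refine exists_congr fun n => and_congr_left fun _ => ?_
  refine Nat.mem_rfind.trans (and_congr ?_ (forall_congr' fun k => forall_congr' fun _ => ?_))
  · exact (Part.mem_map_iff _).trans (by simp)
  · exact (Part.mem_map_iff _).trans (by simp)

theorem Conv.evalo {A : ℕ → ℕ →. ℕ} {O : ℕ →. ℕ} (hA : Conv A O) (c : OCode) :
    Conv (fun w => evalo (A w) c) (evalo O c) := by
  induction c with
  | zero => exact Conv.const _
  | succ => exact Conv.const _
  | left => exact Conv.const _
  | right => exact Conv.const _
  | oracle => exact hA
  | pair a b ha hb =>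
    refine ⟨fun w x y h => ?_, fun x y h => ?_⟩
    · obtain ⟨u, hu, v, hv, rfl⟩ := mem_pair.1 h
      exact mem_pair.2 ⟨u, ha.1 _ _ _ hu, v, hb.1 _ _ _ hv, rfl⟩
    · obtain ⟨u, hu, v, hv, rfl⟩ := mem_pair.1 h
      filter_upwards [ha.2 _ _ hu, hb.2 _ _ hv] with w h1 h2
      exact mem_pair.2 ⟨u, h1, v, h2, rfl⟩
  | comp a b ha hb =>
    refine ⟨fun w x y h => ?_, fun x y h => ?_⟩
    · obtain ⟨u, hu, hv⟩ := mem_comp.1 h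
      exact mem_comp.2 ⟨u, hb.1 _ _ _ hu, ha.1 _ _ _ hv⟩
    · obtain ⟨u, hu, hv⟩ := mem_comp.1 h
      filter_upwards [hb.2 _ _ hu, ha.2 _ _ hv] with w h1 h2
      exact mem_comp.2 ⟨u, h1, h2⟩
  | prec a b ha hb =>
    refine ⟨fun w x y h => ?_, fun x y h => ?_⟩
    · obtain ⟨p, n, rfl⟩ : ∃ p n, x = Nat.pair p n := ⟨_, _, (Nat.pair_unpair x).symm⟩
      induction n generalizing y with
      | zero => exact mem_prec_zero.2 (ha.1 _ _ _ (mem_prec_zero.1 h))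
      | succ n ih =>
        obtain ⟨i, hi, h⟩ := mem_prec_succ.1 h
        exact mem_prec_succ.2 ⟨i, ih _ hi, hb.1 _ _ _ h⟩
    · obtain ⟨p, n, rfl⟩ : ∃ p n, x = Nat.pair p n := ⟨_, _, (Nat.pair_unpair x).symm⟩
      induction n generalizing y with
      | zero =>
        filter_upwards [ha.2 _ _ (mem_prec_zero.1 h)] with w h1
        exact mem_prec_zero.2 h1
      | succ n ih =>
        obtain ⟨i, hi, h⟩ := mem_prec_succ.1 h
        filter_upwards [ih _ hi, hb.2 _ _ h] with w h1 h2
        exact mem_prec_succ.2 ⟨i, h1, h2⟩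
  | rfind' a ha =>
    refine ⟨fun w x y h => ?_, fun x y h => ?_⟩
    · obtain ⟨p, n, rfl⟩ : ∃ p n, x = Nat.pair p n := ⟨_, _, (Nat.pair_unpair x).symm⟩
      obtain ⟨k, ⟨h0, hk⟩, rfl⟩ := mem_rfind'.1 h
      refine mem_rfind'.2 ⟨k, ⟨ha.1 _ _ _ h0, fun j hj => ?_⟩, rfl⟩
      obtain ⟨z, hz, hz0⟩ := hk j hj
      exact ⟨z, ha.1 _ _ _ hz, hz0⟩
    · obtain ⟨p, n, rfl⟩ : ∃ p n, x = Nat.pair p n := ⟨_, _, (Nat.pair_unpair x).symm⟩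
      obtain ⟨k, ⟨h0, hk⟩, rfl⟩ := mem_rfind'.1 h
      have hall : ∀ᶠ w in Filter.atTop, ∀ j ∈ Set.Iio k,
          ∃ z ∈ PCAEmb.evalo (A w) a (Nat.pair p (j + n)), z ≠ 0 := by
        rw [Filter.eventually_all_finite (Set.finite_Iio k)]
        intro j hj
        obtain ⟨z, hz, hz0⟩ := hk j hj
        filter_upwards [ha.2 _ _ hz] with w h1
        exact ⟨z, h1, hz0⟩
      filter_upwards [ha.2 _ _ h0, hall] with w h1 h2
      exact mem_rfind'.2 ⟨k, ⟨h1, h2⟩, rfl⟩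

/-! ### Finite approximations of the oracle -/

/-- The first `w` values of `g`, in reversed order. -/
def pre (g : ℕ → ℕ) : ℕ → List ℕ
  | 0 => []
  | w + 1 => g w :: pre g w

theorem pre_get (g : ℕ → ℕ) (w x y : ℕ) :
    (pre g w).reverse[x]? = some y ↔ x < w ∧ g x = y := by
  have h : ∀ w, (pre g w).reverse = (List.range w).map g := by
    intro w
    induction w with
    | zero => rfl
    | succ w ih => simp [pre, ih, List.range_succ]
  rw [h]
  simp only [List.getElem?_map, Option.map_eq_some_iff, List.getElem?_eq_some_iff,
    List.length_range, List.getElem_range]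
  constructor
  · rintro ⟨a, ⟨h, rfl⟩, rfl⟩
    exact ⟨h, rfl⟩
  · rintro ⟨h, rfl⟩
    exact ⟨x, ⟨h, rfl⟩, rfl⟩

theorem exists_lookup : ∃ lk : List ℕ → Code, Computable lk ∧
    ∀ l x, (lk l).eval x = Part.ofOption (l.reverse[x]?) := by
  have h : Partrec (fun p : List ℕ × ℕ => (Part.ofOption (p.1.reverse[p.2]?) : Part ℕ)) := by
    apply Computable.ofOption
    exact (Primrec.list_getElem?.comp (Primrec.list_reverse.comp Primrec.fst)
      Primrec.snd).to_comp
  obtain ⟨c, hc⟩ := Code.exists_code.1 h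
  refine ⟨fun l => c.curry (Encodable.encode l), ?_, fun l x => ?_⟩
  · exact (Code.primrec₂_curry.comp (Primrec.const c) Primrec.encode).to_comp
  · rw [Code.eval_curry, hc, show Nat.pair (Encodable.encode l) x = Encodable.encode (l, x) from rfl]
    simp only [Encodable.encodek, Part.coe_some, Part.bind_some]
    exact Part.map_id' (fun _ => rfl) _

theorem exists_join : ∃ J : Code → Code → Code, Computable₂ J ∧
    ∀ a b, (J a b).eval = pjoin a.eval b.eval := by
  have h : Partrec (fun p : (Code × Code) × ℕ => (pjoin p.1.1.eval p.1.2.eval p.2 : Part ℕ)) := by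
    have hd : Computable (fun p : (Code × Code) × ℕ => p.2 / 2) :=
      (Primrec.nat_div.comp Primrec.snd (Primrec.const 2)).to_comp
    have hm : Computable (fun p : (Code × Code) × ℕ => decide (p.2 % 2 = 0)) :=
      (Primrec.eq.decide.comp (Primrec.nat_mod.comp Primrec.snd (Primrec.const 2))
        (Primrec.const 0)).to_comp
    refine (Partrec.cond hm
      (Code.eval_part.comp (Computable.fst.comp Computable.fst) hd)
      (Code.eval_part.comp (Computable.snd.comp Computable.fst) hd)).of_eq ?_
    intro p
    by_cases hx : p.2 % 2 = 0 <;> simp [pjoin, hx]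
  obtain ⟨c, hc⟩ := Code.exists_code.1 h
  refine ⟨fun a b => c.curry (Encodable.encode (a, b)), ?_, fun a b => ?_⟩
  · exact (Code.primrec₂_curry.comp (Primrec.const c) Primrec.encode).to_comp
  · funext x
    rw [Code.eval_curry, hc,
      show Nat.pair (Encodable.encode (a, b)) x = Encodable.encode ((a, b), x) from rfl]
    simp only [Encodable.encodek, Part.coe_some, Part.bind_some]
    exact Part.map_id' (fun _ => rfl) _

/-- Application with a fixed left-hand side is given by a fixed code. -/
theorem app_code (θ : ℕ →. ℕ) : ∃ c : OCode, ∀ ρ : ℕ →. ℕ,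
    (fun n => (θ 0).bind fun e => phi (pjoin θ ρ) e n) = evalo (pjoin θ ρ) c := by
  rcases Part.eq_none_or_eq_some (θ 0) with h | ⟨e, h⟩
  · refine ⟨.rfind' (.comp .succ .zero), fun ρ => ?_⟩
    funext x
    rw [h, Part.bind_none]
    symm
    rw [Part.eq_none_iff]
    intro y hy
    obtain ⟨p, n, rfl⟩ : ∃ p n, x = Nat.pair p n := ⟨_, _, (Nat.pair_unpair x).symm⟩
    obtain ⟨k, ⟨h0, -⟩, -⟩ := mem_rfind'.1 hy
    obtain ⟨u, -, h0⟩ := mem_comp.1 h0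
    simp [evalo] at h0
  · refine ⟨OCode.ofNat e, fun ρ => ?_⟩
    funext x
    rw [h, Part.bind_some]
    rfl

/-- The value of the characteristic function. -/
noncomputable def ch (X : Set ℕ) (n : ℕ) : ℕ := X.indicator (fun _ => 1) n

theorem chi_eq (X : Set ℕ) : chi X = toPFun (ch X) := rfl

/-- Iterated application is uniformly semicomputable. -/
theorem iter_re (Y : Set ℕ) (S Z D : ℕ →. ℕ) (hS : RecursiveIn (chi Y) S)
    (hZ : RecursiveIn (chi Y) Z) (hD : RecursiveIn (chi Y) D) (F : ℕ → ℕ →. ℕ)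
    (G : ℕ → ℕ →. ℕ) (h0 : F 0 = Z)
    (hs : ∀ n, F (n + 1) = fun x => (S 0).bind fun e => phi (pjoin S (F n)) e x)
    (hG : ∀ n, G n = fun x => (D 0).bind fun e => phi (pjoin D (F n)) e x) (m v : ℕ) :
    ∃ r : (ℕ × ℕ) × List ℕ → Bool, Computable r ∧
      ∀ n, v ∈ G n m ↔ ∃ w, r ((n, w), pre (ch Y) w.unpair.1) = true := by
  obtain ⟨lk, hlk, hlk'⟩ := exists_lookup
  obtain ⟨J, hJ, hJ'⟩ := exists_join
  obtain ⟨cs, hcs⟩ := hS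
  obtain ⟨cz, hcz⟩ := hZ
  obtain ⟨cd, hcd⟩ := hD
  obtain ⟨as, has⟩ := app_code S
  obtain ⟨ad, had⟩ := app_code D
  let C : List ℕ → ℕ → Code := fun l n =>
    Nat.rec (sub (lk l) cz) (fun _ d => sub (J (sub (lk l) cs) d) as) n
  let E : List ℕ → ℕ → Code := fun l n => sub (J (sub (lk l) cd) (C l n)) ad
  have hC : Computable (fun p : List ℕ × ℕ => C p.1 p.2) := by
    refine Computable.nat_rec (f := fun p : List ℕ × ℕ => p.2)
      (g := fun p : List ℕ × ℕ => sub (lk p.1) cz)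
      (h := fun (p : List ℕ × ℕ) (q : ℕ × Code) => sub (J (sub (lk p.1) cs) q.2) as)
      Computable.snd ((sub_computable cz).comp (hlk.comp Computable.fst)) ?_
    exact (sub_computable as).comp (hJ.comp
      ((sub_computable cs).comp (hlk.comp (Computable.fst.comp Computable.fst)))
      (Computable.snd.comp Computable.snd))
  have hE : Computable (fun p : List ℕ × ℕ => E p.1 p.2) :=
    (sub_computable ad).comp (hJ.comp
      ((sub_computable cd).comp (hlk.comp Computable.fst)) hC)
  have hO : Conv (fun w => (lk (pre (ch Y) w)).eval) (chi Y) := by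
    refine ⟨fun w x y h => ?_, fun x y h => ?_⟩
    · change y ∈ (lk (pre (ch Y) w)).eval x at h
      rw [hlk', Part.mem_ofOption, Option.mem_def, pre_get] at h
      rw [chi_eq, ← h.2]
      exact Part.mem_some _
    · filter_upwards [Filter.eventually_gt_atTop x] with w hw
      rw [hlk', Part.mem_ofOption, Option.mem_def, pre_get]
      exact ⟨hw, (Part.mem_some_iff.1 h).symm⟩
  have hCc : ∀ n, Conv (fun w => (C (pre (ch Y) w) n).eval) (F n) := by
    intro n
    induction n with
    | zero =>
      have := hO.evalo cz
      rw [h0, ← hcz]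
      simp only [← eval_sub] at this
      exact this
    | succ n ih =>
      have := (Conv.pjoin (hO.evalo cs) ih).evalo as
      rw [hcs, ← has, ← hs] at this
      simpa only [← eval_sub, ← hJ'] using this
  have hEc : ∀ n, Conv (fun w => (E (pre (ch Y) w) n).eval) (G n) := by
    intro n
    have := (Conv.pjoin (hO.evalo cd) (hCc n)).evalo ad
    rw [hcd, ← had, ← hG] at this
    simpa only [← eval_sub, ← hJ'] using this
  clear_value E
  clear hCc hC
  clear_value C
  refine ⟨fun p => decide (Code.evaln p.1.2.unpair.2 (E p.2 p.1.1) m = some v), ?_, fun n => ?_⟩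
  · refine Computable₂.comp (f := fun a b : Option ℕ => decide (a = b))
      Primrec.eq.decide.to_comp ?_ (Computable.const _)
    have e1 : Computable (fun p : (ℕ × ℕ) × List ℕ => E p.2 p.1.1) :=
      hE.comp (Computable.pair Computable.snd (Computable.fst.comp Computable.fst))
    have e2 : Computable (fun p : (ℕ × ℕ) × List ℕ => p.1.2.unpair.2) :=
      Computable.snd.comp (Computable.unpair.comp (Computable.snd.comp Computable.fst))
    have e3 : Computable (fun p : (ℕ × ℕ) × List ℕ => ((p.1.2.unpair.2, E p.2 p.1.1), m)) :=
      (e2.pair e1).pair (Computable.const m)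
    exact Computable.comp (g := fun p : (ℕ × ℕ) × List ℕ => ((p.1.2.unpair.2, E p.2 p.1.1), m))
      Code.primrec_evaln.to_comp e3
  · simp only [decide_eq_true_eq]
    constructor
    · intro h
      obtain ⟨w, hw⟩ := ((hEc n).2 _ _ h).exists
      obtain ⟨k, hk⟩ := Code.evaln_complete.1 hw
      refine ⟨Nat.pair w k, ?_⟩
      simp only [Nat.unpair_pair]
      exact hk
    · rintro ⟨w, hw⟩
      exact (hEc n).1 _ _ _ (Code.evaln_sound hw)

/-! ### Sets that are both c.e. and co-c.e. -/

theorem some_pair {O : ℕ →. ℕ} {a b : OCode} {x u v : ℕ} (ha : evalo O a x = Part.some u)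
    (hb : evalo O b x = Part.some v) : evalo O (.pair a b) x = Part.some (Nat.pair u v) := by
  rw [Part.eq_some_iff] at *
  exact mem_pair.2 ⟨u, ha, v, hb, rfl⟩

theorem some_comp {O : ℕ →. ℕ} {a b : OCode} {x u v : ℕ} (hb : evalo O b x = Part.some u)
    (ha : evalo O a u = Part.some v) : evalo O (.comp a b) x = Part.some v := by
  rw [Part.eq_some_iff] at *
  exact mem_comp.2 ⟨u, hb, ha⟩

theorem some_zero (O : ℕ →. ℕ) (x : ℕ) : evalo O .zero x = Part.some 0 := rfl

theorem some_succ (O : ℕ →. ℕ) (x : ℕ) : evalo O .succ x = Part.some (x + 1) := rfl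

theorem some_left (O : ℕ →. ℕ) (x y : ℕ) : evalo O .left (Nat.pair x y) = Part.some x := by
  simp [evalo]

theorem some_right (O : ℕ →. ℕ) (x y : ℕ) : evalo O .right (Nat.pair x y) = Part.some y := by
  simp [evalo]

theorem exists_pre (Y : Set ℕ) : ∃ c : OCode, ∀ a w,
    evalo (chi Y) c (Nat.pair a w) = Part.some (Encodable.encode (pre (ch Y) w)) := by
  refine ⟨.prec .zero (.comp .succ (.pair (.comp .oracle (.comp .left .right))
    (.comp .right .right))), fun a w => ?_⟩
  induction w with
  | zero => exact Part.eq_some_iff.2 (mem_prec_zero.2 (Part.mem_some _))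
  | succ w ih =>
    refine Part.eq_some_iff.2 (mem_prec_succ.2 ⟨_, Part.eq_some_iff.1 ih, Part.eq_some_iff.1 ?_⟩)
    refine some_comp (some_pair (some_comp (some_comp (some_right _ _ _) (some_left _ _ _))
      (v := ch Y w) rfl) (some_comp (some_right _ _ _) (some_right _ _ _))) ?_
    rw [some_succ]
    rfl

theorem turing_of (X Y : Set ℕ) (r₁ r₂ : (ℕ × ℕ) × List ℕ → Bool)
    (hr₁ : Computable r₁) (hr₂ : Computable r₂)
    (h₁ : ∀ n, n ∈ X ↔ ∃ w, r₁ ((n, w), pre (ch Y) w.unpair.1) = true)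
    (h₂ : ∀ n, n ∉ X ↔ ∃ w, r₂ ((n, w), pre (ch Y) w.unpair.1) = true) :
    TuringLE X Y := by
  have hdec : Computable (fun z : ℕ =>
      ((Encodable.decode z : Option ((ℕ × ℕ) × List ℕ)).getD default)) :=
    Computable.option_getD Computable.decode (Computable.const _)
  obtain ⟨c₁, hc₁⟩ := exists_tr (g := fun z : ℕ =>
      cond (r₁ ((Encodable.decode z : Option ((ℕ × ℕ) × List ℕ)).getD default)) 0
        (cond (r₂ ((Encodable.decode z : Option ((ℕ × ℕ) × List ℕ)).getD default)) 0 1))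
    (Computable.cond (hr₁.comp hdec) (Computable.const 0)
      (Computable.cond (hr₂.comp hdec) (Computable.const 0) (Computable.const 1)))
  obtain ⟨c₂, hc₂⟩ := exists_tr (g := fun z : ℕ =>
      cond (r₁ ((Encodable.decode z : Option ((ℕ × ℕ) × List ℕ)).getD default)) 1 0)
    (Computable.cond (hr₁.comp hdec) (Computable.const 1) (Computable.const 0))
  obtain ⟨L, hL⟩ := exists_pre Y
  obtain ⟨I, hI⟩ := exists_tr (g := fun z : ℕ => z) Computable.id
  obtain ⟨U, hU⟩ := exists_tr (g := fun z : ℕ => z.unpair.2.unpair.1)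
    (Computable.fst.comp (Computable.unpair.comp (Computable.snd.comp Computable.unpair)))
  have hB : ∀ n t, evalo (chi Y) (.pair I (.comp L (.pair .zero U))) (Nat.pair n t) =
      Part.some (Encodable.encode ((n, t), pre (ch Y) t.unpair.1)) := by
    intro n t
    refine some_pair (hI _ _) (some_comp (some_pair (some_zero _ _) (hU _ _)) ?_)
    rw [hL, Nat.unpair_pair]
    rfl
  generalize (OCode.pair I (.comp L (.pair .zero U))) = B at hB
  have hB₁ : ∀ n t, evalo (chi Y) (.comp c₁ B) (Nat.pair n t) =
      Part.some (cond (r₁ ((n, t), pre (ch Y) t.unpair.1)) 0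
        (cond (r₂ ((n, t), pre (ch Y) t.unpair.1)) 0 1)) := by
    intro n t
    refine some_comp (hB n t) ?_
    rw [hc₁, Encodable.encodek]
    rfl
  have hB₂ : ∀ n t, evalo (chi Y) (.comp c₂ B) (Nat.pair n t) =
      Part.some (cond (r₁ ((n, t), pre (ch Y) t.unpair.1)) 1 0) := by
    intro n t
    refine some_comp (hB n t) ?_
    rw [hc₂, Encodable.encodek]
    rfl
  refine ⟨.comp (.comp c₂ B) (.pair I (.comp (.rfind' (.comp c₁ B)) (.pair I .zero))), ?_⟩
  funext n
  have hex : ∃ t, r₁ ((n, t), pre (ch Y) t.unpair.1) = true ∨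
      r₂ ((n, t), pre (ch Y) t.unpair.1) = true := by
    by_cases hn : n ∈ X
    · exact ((h₁ n).1 hn).imp fun _ h => Or.inl h
    · exact ((h₂ n).1 hn).imp fun _ h => Or.inr h
  classical
  have hspec := Nat.find_spec hex
  have hmin := fun k => Nat.find_min hex (m := k)
  generalize Nat.find hex = t at hspec hmin
  have hr : evalo (chi Y) (.rfind' (.comp c₁ B)) (Nat.pair n 0) = Part.some t := by
    refine Part.eq_some_iff.2 (mem_rfind'.2 ⟨t, ⟨?_, fun k hk => ?_⟩, rfl⟩)
    · rw [Nat.add_zero, hB₁, Part.mem_some_iff]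
      rcases hspec with h | h
      · rw [h]; rfl
      · rw [h]; cases r₁ ((n, t), pre (ch Y) t.unpair.1) <;> rfl
    · have hk' := hmin k hk
      rw [not_or, Bool.not_eq_true, Bool.not_eq_true] at hk'
      rw [Nat.add_zero, hB₁, hk'.1, hk'.2]
      exact ⟨1, Part.mem_some _, one_ne_zero⟩
  have hfin : evalo (chi Y) (.comp (.comp c₂ B)
      (.pair I (.comp (.rfind' (.comp c₁ B)) (.pair I .zero)))) n =
      Part.some (cond (r₁ ((n, t), pre (ch Y) t.unpair.1)) 1 0) :=
    some_comp (some_pair (hI _ _) (some_comp (some_pair (hI _ _) (some_zero _ _)) hr)) (hB₂ n t)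
  rw [hfin, chi_eq, toPFun]
  congr 1
  by_cases hn : n ∈ X
  · rcases hspec with h | h
    · rw [h]; simp [ch, hn]
    · exact absurd hn ((h₂ n).2 ⟨t, h⟩)
  · have : r₁ ((n, t), pre (ch Y) t.unpair.1) = false := by
      rw [← Bool.not_eq_true]
      exact fun h => hn ((h₁ n).2 ⟨t, h⟩)
    rw [this]; simp [ch, hn]

/-! ### Elements of `B^X` -/

theorem rec_const (X : Set ℕ) (i : ℕ) : RecursiveIn (chi X) (toPFun fun _ => i) := by
  obtain ⟨c, hc⟩ := exists_tr (g := fun _ : ℕ => i) (Computable.const i)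
  exact ⟨c, funext fun n => hc _ n⟩

/-- Numerals. -/
def num (X : Set ℕ) (i : ℕ) : Bel X := ⟨toPFun fun _ => i, rec_const X i⟩

theorem mem_subApp {α : Type*} {app : α → α → Part α} {P : α → Prop} {a b c : Subtype P} {d : α}
    (h : app a.1 b.1 = Part.some d) : c ∈ subApp app P a b ↔ c.1 = d := by
  rw [subApp, h, Part.bind_some, Part.mem_assert_iff]
  constructor
  · rintro ⟨h, h'⟩
    exact congrArg Subtype.val (Part.mem_some_iff.1 h')
  · rintro rfl
    exact ⟨c.2, Part.mem_some_iff.2 rfl⟩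

theorem mem_bXApp {X : Set ℕ} {a b c : Bel X} :
    c ∈ bXApp X a b ↔ c.1 = fun n => (a.1 0).bind fun e => phi (pjoin a.1 b.1) e n :=
  mem_subApp rfl

theorem exists_succ (X : Set ℕ) : ∃ S : Bel X, ∀ n, num X (n + 1) ∈ bXApp X S (num X n) := by
  obtain ⟨e, he⟩ := ofNat_surj (.comp .succ (.comp .oracle (.comp .succ .zero)))
  refine ⟨num X e, fun n => mem_bXApp.2 (funext fun x => ?_)⟩
  change Part.some (n + 1) = (Part.some e).bind _
  rw [Part.bind_some, phi, he]
  exact (some_comp (some_comp (some_comp (some_zero _ _) (some_succ _ _)) (v := n) rfl)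
    (some_succ _ _)).symm

theorem exists_dec (X : Set ℕ) (g : ℕ → ℕ) (hg : RecursiveIn (chi X) (toPFun g)) :
    ∃ D : Bel X, ∀ n, num X (g n) ∈ bXApp X D (num X n) := by
  obtain ⟨M, hM⟩ := exists_tr (g := fun z : ℕ => 2 * (z + 1))
    (Primrec.nat_mul.comp (Primrec.const 2) Primrec.succ).to_comp
  obtain ⟨e, he⟩ := ofNat_surj
    (.comp .oracle (.comp M (.comp .oracle (.comp .succ .zero))))
  obtain ⟨cg, hcg⟩ := hg
  obtain ⟨I, hI⟩ := exists_tr (g := fun z : ℕ => z) Computable.id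
  obtain ⟨ce, hce⟩ := exists_tr (g := fun _ : ℕ => e) (Computable.const e)
  let T : OCode := .prec ce (.comp cg (.comp .left .right))
  have hT0 : evalo (chi X) T (Nat.pair 0 0) = Part.some e :=
    Part.eq_some_iff.2 (mem_prec_zero.2 (Part.eq_some_iff.1 (hce _ _)))
  have hTs : ∀ k i, evalo (chi X) T (Nat.pair 0 k) = Part.some i →
      evalo (chi X) T (Nat.pair 0 (k + 1)) = Part.some (g k) := by
    intro k i hi
    refine Part.eq_some_iff.2 (mem_prec_succ.2 ⟨i, Part.eq_some_iff.1 hi, Part.eq_some_iff.1 ?_⟩)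
    refine some_comp (some_comp (some_right _ _ _) (some_left _ _ _)) ?_
    rw [hcg]; rfl
  have hT : ∀ k, evalo (chi X) T (Nat.pair 0 (k + 1)) = Part.some (g k) := by
    intro k
    induction k with
    | zero => exact hTs _ _ hT0
    | succ k ih => exact hTs _ _ ih
  have hD0 : evalo (chi X) (.comp T (.pair .zero I)) 0 = Part.some e :=
    some_comp (some_pair (some_zero _ _) (hI _ _)) hT0
  have hD : ∀ k, evalo (chi X) (.comp T (.pair .zero I)) (k + 1) = Part.some (g k) :=
    fun k => some_comp (some_pair (some_zero _ _) (hI _ _)) (hT k)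
  refine ⟨⟨_, ⟨.comp T (.pair .zero I), rfl⟩⟩, fun n => mem_bXApp.2 (funext fun x => ?_)⟩
  change Part.some (g n) = (evalo (chi X) (.comp T (.pair .zero I)) 0).bind fun e =>
    phi (pjoin (evalo (chi X) (.comp T (.pair .zero I))) (num X n).1) e x
  generalize evalo (chi X) (.comp T (.pair .zero I)) = θ at hD0 hD
  rw [hD0, Part.bind_some, phi, he]
  refine (some_comp (some_comp (some_comp (some_comp (some_zero _ _) (some_succ _ _)) (v := n) rfl)
    (hM _ _)) ?_).symm
  change pjoin θ _ (2 * (n + 1)) = _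
  have h1 : (2 * (n + 1)) % 2 = 0 := by omega
  have h2 : (2 * (n + 1)) / 2 = n + 1 := by omega
  rw [pjoin, if_pos h1, h2, hD]

theorem key (X Y : Set ℕ) (f : Bel X → Bel Y) (hf : IsPCAEmbedding (bXApp X) (bXApp Y) f)
    (g : ℕ → ℕ) (hg : RecursiveIn (chi X) (toPFun g)) (m v : ℕ) :
    ∃ r : (ℕ × ℕ) × List ℕ → Bool, Computable r ∧
      ∀ n, v ∈ (f (num X (g n))).1 m ↔ ∃ w, r ((n, w), pre (ch Y) w.unpair.1) = true := by
  obtain ⟨S, hS⟩ := exists_succ X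
  obtain ⟨D, hD⟩ := exists_dec X g hg
  exact iter_re Y (f S).1 (f (num X 0)).1 (f D).1 (f S).2 (f (num X 0)).2 (f D).2
    (fun n => (f (num X n)).1) (fun n => (f (num X (g n))).1) rfl
    (fun n => mem_bXApp.1 (hf.2 _ _ _ (hS n))) (fun n => mem_bXApp.1 (hf.2 _ _ _ (hD n))) m v

theorem forward (X Y : Set ℕ) (f : Bel X → Bel Y) (hf : IsPCAEmbedding (bXApp X) (bXApp Y) f) :
    TuringLE X Y := by
  have hne : f (num X 1) ≠ f (num X 0) := by
    intro h
    have h1 := congrFun (congrArg Subtype.val (hf.1 h)) 0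
    exact one_ne_zero (Part.some_injective h1)
  have hg₁ : RecursiveIn (chi X) (toPFun (ch X)) := ⟨.oracle, rfl⟩
  have hg₂ : RecursiveIn (chi X) (toPFun fun n => 1 - ch X n) := by
    obtain ⟨c, hc⟩ := exists_tr (g := fun z : ℕ => 1 - z)
      (Primrec.nat_sub.comp (Primrec.const 1) Primrec.id).to_comp
    exact ⟨.comp c .oracle, funext fun n => some_comp (u := ch X n) rfl (hc _ _)⟩
  have hin : ∀ n, n ∈ X → ch X n = 1 := fun n h => by simp [ch, h]
  have hout : ∀ n, n ∉ X → ch X n = 0 := fun n h => by simp [ch, h]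
  have hex : ∃ m v, (v ∈ (f (num X 1)).1 m ∧ v ∉ (f (num X 0)).1 m) ∨
      (v ∈ (f (num X 0)).1 m ∧ v ∉ (f (num X 1)).1 m) := by
    by_contra hcon
    push Not at hcon
    refine hne (Subtype.ext (funext fun m => Part.ext fun v => ?_))
    exact ⟨(hcon m v).1, (hcon m v).2⟩
  obtain ⟨m, v, h⟩ := hex
  obtain ⟨r₁, hr₁, h₁⟩ := key X Y f hf _ hg₁ m v
  obtain ⟨r₂, hr₂, h₂⟩ := key X Y f hf _ hg₂ m v
  rcases h with ⟨ht, hb⟩ | ⟨ht, hb⟩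
  · refine turing_of X Y r₁ r₂ hr₁ hr₂ (fun n => ?_) (fun n => ?_)
    · rw [← h₁]
      by_cases hn : n ∈ X
      · simp [hn, hin n hn, ht]
      · simp [hn, hout n hn, hb]
    · rw [← h₂]
      by_cases hn : n ∈ X
      · simp [hn, hin n hn, hb]
      · simp [hn, hout n hn, ht]
  · refine turing_of X Y r₂ r₁ hr₂ hr₁ (fun n => ?_) (fun n => ?_)
    · rw [← h₂]
      by_cases hn : n ∈ X
      · simp [hn, hin n hn, ht]
      · simp [hn, hout n hn, hb]
    · rw [← h₁]
      by_cases hn : n ∈ X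
      · simp [hn, hin n hn, hb]
      · simp [hn, hout n hn, ht]

theorem stmt12 (X Y : Set ℕ) :
    (∃ f : Bel X → Bel Y, IsPCAEmbedding (bXApp X) (bXApp Y) f) ↔
      TuringLE X Y := by
  constructor
  · rintro ⟨f, hf⟩
    exact forward X Y f hf
  · rintro ⟨d, hd⟩
    refine ⟨fun a => ⟨a.1, ?_⟩, fun a b h => ?_, fun a a' c h => ?_⟩
    · obtain ⟨c, hc⟩ := a.2
      exact ⟨osub d c, by rw [evalo_osub, hd, hc]⟩
    · have h' : a.1 = b.1 := congrArg (fun z : Bel Y => z.1) h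
      exact Subtype.ext h'
    · exact mem_bXApp.2 ((mem_bXApp (X := X)).1 h)


end PCAEmb
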